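/- arXiv:math/9810132 — 12 statements merged into one kernel-verified Lean document; each statement's English description precedes it below -/
import Mathlib

section
/- Let E be a finite-dimensional real normed vector space and Ψ : E → E a C^∞ map. Define a multiplication on C^∞ vector fields X, Y : E → E by (X∘Y)(p) := D²Ψ(p)(X(p), Y(p)), where D²Ψ(p) is the second Fréchet derivative of Ψ at p (a symmetric bilinear map E × E → E). Assume that for every p ∈ E the bilinear map D²Ψ(p) is associative, i.e. D²Ψ(p)(D²Ψ(p)(u,v), w) = D²Ψ(p)(u, D²Ψ(p)(v,w)) for all u,v,w ∈ E. Then for all C^∞ vector fields X, Y, Z, W : E → E the F-manifold identity holds: [X∘Y, Z∘W] − [X∘Y,Z]∘W − Z∘[X∘Y,W] − X∘[Y,Z∘W] + X∘[Y,Z]∘W + X∘Z∘[Y,W] − Y∘[X,Z∘W] + Y∘[X,Z]∘W + Y∘Z∘[X,W] = 0. (This is Theorem 2a of the paper in flat coordinates: on a Frobenius manifold the structure tensor A_{ab}{}^c = ∂_a∂_b∂^cΦ is the second derivative of the vector-valued potential Ψ^c = ∂^cΦ, and associativity of ∘ is the WDVV condition; the conclusion says every Frobenius manifold is an F-manifold.)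 -/
/-!
Write `u v = D²Ψ(p)(u, v)` and `B = D³Ψ(p)`. By symmetry of higher derivatives the product is commutative and
`B` is totally symmetric. Expanding the nine terms with the Leibniz rule (`fderiv_potMul`), all
contributions containing a first derivative of a vector field cancel by commutativity and
associativity of the product, and what remains is
`B(xy,z,w) - B(zw,x,y) + B(x,y,z)w + B(x,y,w)z - x B(y,z,w) - y B(x,z,w)`.
Differentiating the associativity law (`fderiv_assoc`) gives
`B(t,uv,w) + B(t,u,v)w = B(t,u,vw) + u B(t,v,w)`; the instances `(t,u,v,w) = (z,x,y,w)` and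
`(x,y,w,z)` of this identity add up to the vanishing of that expression.
-/

open VectorField

/-- The multiplication of vector fields induced by the second Fréchet derivative of a
vector-valued potential `Ψ`: `(X∘Y)(p) = D²Ψ(p)(X(p), Y(p))`. -/
noncomputable def potMul {E : Type*} [NormedAddCommGroup E] [NormedSpace ℝ E]
    (Ψ : E → E) (X Y : E → E) : E → E :=
  fun p => fderiv ℝ (fderiv ℝ Ψ) p (X p) (Y p)

section

variable {E : Type*} [NormedAddCommGroup E] [NormedSpace ℝ E]

lemma differentiable_fderiv_fderiv {Ψ : E → E} (hΨ : ContDiff ℝ (⊤ : ℕ∞) Ψ) :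
    Differentiable ℝ (fderiv ℝ (fderiv ℝ Ψ)) := by
  have h1 : ContDiff ℝ 2 (fderiv ℝ Ψ) :=
    (contDiff_infty.1 hΨ 3).fderiv_right (by norm_num)
  have h2 : ContDiff ℝ 1 (fderiv ℝ (fderiv ℝ Ψ)) := h1.fderiv_right (by norm_num)
  exact h2.differentiable (by norm_num)

lemma hasFDerivAt_potMul {Ψ : E → E} (hΨ : ContDiff ℝ (⊤ : ℕ∞) Ψ) {U V : E → E} {p : E}
    (hU : DifferentiableAt ℝ U p) (hV : DifferentiableAt ℝ V p) :
    HasFDerivAt (potMul Ψ U V)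
      ((fderiv ℝ (fderiv ℝ Ψ) p (U p)).comp (fderiv ℝ V p) +
        ((fderiv ℝ (fderiv ℝ Ψ) p).comp (fderiv ℝ U p) +
          (fderiv ℝ (fderiv ℝ (fderiv ℝ Ψ)) p).flip (U p)).flip (V p)) p :=
  ((differentiable_fderiv_fderiv hΨ p).hasFDerivAt.clm_apply hU.hasFDerivAt).clm_apply
    hV.hasFDerivAt

lemma fderiv_potMul {Ψ : E → E} (hΨ : ContDiff ℝ (⊤ : ℕ∞) Ψ) {U V : E → E} {p : E}
    (hU : DifferentiableAt ℝ U p) (hV : DifferentiableAt ℝ V p) (t : E) :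
    fderiv ℝ (potMul Ψ U V) p t =
      fderiv ℝ (fderiv ℝ (fderiv ℝ Ψ)) p t (U p) (V p)
        + fderiv ℝ (fderiv ℝ Ψ) p (fderiv ℝ U p t) (V p)
        + fderiv ℝ (fderiv ℝ Ψ) p (U p) (fderiv ℝ V p t) := by
  rw [(hasFDerivAt_potMul hΨ hU hV).fderiv]
  simp
  abel

lemma sndFDeriv_comm {Ψ : E → E} (hΨ : ContDiff ℝ (⊤ : ℕ∞) Ψ) (p u v : E) :
    fderiv ℝ (fderiv ℝ Ψ) p u v = fderiv ℝ (fderiv ℝ Ψ) p v u :=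
  ((contDiff_infty.1 hΨ 2).contDiffAt.isSymmSndFDerivAt (by simp)).eq u v

lemma thirdFDeriv_comm_left {Ψ : E → E} (hΨ : ContDiff ℝ (⊤ : ℕ∞) Ψ) (p t u v : E) :
    fderiv ℝ (fderiv ℝ (fderiv ℝ Ψ)) p t u v = fderiv ℝ (fderiv ℝ (fderiv ℝ Ψ)) p u t v := by
  have h1 : ContDiff ℝ 2 (fderiv ℝ Ψ) :=
    (contDiff_infty.1 hΨ 3).fderiv_right (by norm_num)
  rw [(h1.contDiffAt.isSymmSndFDerivAt (by simp)).eq t u]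

/-- Obtained by differentiating the symmetry of `D²Ψ`. -/
lemma thirdFDeriv_comm_right {Ψ : E → E} (hΨ : ContDiff ℝ (⊤ : ℕ∞) Ψ) (p t u v : E) :
    fderiv ℝ (fderiv ℝ (fderiv ℝ Ψ)) p t u v = fderiv ℝ (fderiv ℝ (fderiv ℝ Ψ)) p t v u := by
  have h : potMul Ψ (fun _ => u) (fun _ => v) = potMul Ψ (fun _ => v) (fun _ => u) :=
    funext fun q => sndFDeriv_comm hΨ q u v
  have hderiv := congrArg (fun f => fderiv ℝ f p t) h
  simpa [fderiv_potMul hΨ] using hderiv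

/-- The derivative of the associativity law in a direction `t`. -/
lemma fderiv_assoc {Ψ : E → E} (hΨ : ContDiff ℝ (⊤ : ℕ∞) Ψ)
    (hassoc : ∀ p u v w : E,
      fderiv ℝ (fderiv ℝ Ψ) p (fderiv ℝ (fderiv ℝ Ψ) p u v) w =
      fderiv ℝ (fderiv ℝ Ψ) p u (fderiv ℝ (fderiv ℝ Ψ) p v w))
    (p t u v w : E) :
    fderiv ℝ (fderiv ℝ (fderiv ℝ Ψ)) p t (fderiv ℝ (fderiv ℝ Ψ) p u v) w
        + fderiv ℝ (fderiv ℝ Ψ) p (fderiv ℝ (fderiv ℝ (fderiv ℝ Ψ)) p t u v) w =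
      fderiv ℝ (fderiv ℝ (fderiv ℝ Ψ)) p t u (fderiv ℝ (fderiv ℝ Ψ) p v w)
        + fderiv ℝ (fderiv ℝ Ψ) p u (fderiv ℝ (fderiv ℝ (fderiv ℝ Ψ)) p t v w) := by
  have hd : ∀ a b : E, DifferentiableAt ℝ (potMul Ψ (fun _ => a) (fun _ => b)) p := fun a b =>
    (hasFDerivAt_potMul hΨ (differentiableAt_const a)
      (differentiableAt_const b)).differentiableAt
  have h : potMul Ψ (potMul Ψ (fun _ => u) (fun _ => v)) (fun _ => w)
      = potMul Ψ (fun _ => u) (potMul Ψ (fun _ => v) (fun _ => w)) :=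
    funext fun q => hassoc q u v w
  have hderiv := congrArg (fun f => fderiv ℝ f p t) h
  simpa [fderiv_potMul hΨ, hd, potMul] using hderiv

end

/-- Theorem 2a in flat coordinates: if `Ψ : E → E` is `C^∞` and the bilinear map
`D²Ψ(p)` is associative for every `p` (the WDVV condition), then the nine-term
F-manifold identity (1) holds for all `C^∞` vector fields. -/
theorem frobenius_is_F_manifold {E : Type*} [NormedAddCommGroup E] [NormedSpace ℝ E]
    [FiniteDimensional ℝ E]
    (Ψ : E → E) (hΨ : ContDiff ℝ (⊤ : ℕ∞) Ψ)
    (hassoc : ∀ p u v w : E,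
      fderiv ℝ (fderiv ℝ Ψ) p (fderiv ℝ (fderiv ℝ Ψ) p u v) w =
      fderiv ℝ (fderiv ℝ Ψ) p u (fderiv ℝ (fderiv ℝ Ψ) p v w))
    (X Y Z W : E → E)
    (hX : ContDiff ℝ (⊤ : ℕ∞) X) (hY : ContDiff ℝ (⊤ : ℕ∞) Y)
    (hZ : ContDiff ℝ (⊤ : ℕ∞) Z) (hW : ContDiff ℝ (⊤ : ℕ∞) W) :
    lieBracket ℝ (potMul Ψ X Y) (potMul Ψ Z W)
      - potMul Ψ (lieBracket ℝ (potMul Ψ X Y) Z) W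
      - potMul Ψ Z (lieBracket ℝ (potMul Ψ X Y) W)
      - potMul Ψ X (lieBracket ℝ Y (potMul Ψ Z W))
      + potMul Ψ X (potMul Ψ (lieBracket ℝ Y Z) W)
      + potMul Ψ X (potMul Ψ Z (lieBracket ℝ Y W))
      - potMul Ψ Y (lieBracket ℝ X (potMul Ψ Z W))
      + potMul Ψ Y (potMul Ψ (lieBracket ℝ X Z) W)
      + potMul Ψ Y (potMul Ψ Z (lieBracket ℝ X W)) = 0 := by
  funext p
  have dX : DifferentiableAt ℝ X p := hX.differentiable (by simp) p
  have dY : DifferentiableAt ℝ Y p := hY.differentiable (by simp) p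
  have dZ : DifferentiableAt ℝ Z p := hZ.differentiable (by simp) p
  have dW : DifferentiableAt ℝ W p := hW.differentiable (by simp) p
  have e1 := fderiv_assoc hΨ hassoc p (Z p) (X p) (Y p) (W p)
  have e2 := fderiv_assoc hΨ hassoc p (X p) (Y p) (W p) (Z p)
  have hA := sndFDeriv_comm hΨ p
  have hB := thirdFDeriv_comm_left hΨ p
  have hB_right := thirdFDeriv_comm_right hΨ p
  have hA_assoc := hassoc p
  simp only [Pi.add_apply, Pi.sub_apply, Pi.zero_apply, lieBracket, fderiv_potMul hΨ dX dY,
    fderiv_potMul hΨ dZ dW]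
  simp only [potMul, lieBracket, fderiv_potMul hΨ dX dY, fderiv_potMul hΨ dZ dW]
  generalize fderiv ℝ (fderiv ℝ (fderiv ℝ Ψ)) p = B at *
  generalize fderiv ℝ (fderiv ℝ Ψ) p = A at *
  have hA_left_comm : ∀ u v w, A u (A v w) = A v (A u w) := fun u v w => by
    rw [← hA_assoc, hA u v, hA_assoc]
  -- Ordered rewriting brings every product, and the arguments of `B`, to a normal form.
  simp only [map_add, map_sub, add_apply, sub_apply,
    hA_assoc, hA, hA_left_comm, hB, hB_right] at e1 e2 ⊢
  linear_combination (norm := module) e1 + e2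
end

section
/- Let (A, ∘, [·,·]) be an F-algebra with an identity element e for ∘, over a commutative ring R (e.g. a real vector space). Let d0 ∈ R and let E ∈ A satisfy P_E(Z,W) = d0 • (Z∘W) for all Z, W ∈ A (E is an Euler field of weight d0). Write E^{∘k} for the k-th ∘-power of E, with E^{∘0} := e. Then for all natural numbers m, n with m + n ≥ 1: [E^{∘n}, E^{∘m}] = ((m : ℤ) − (n : ℤ)) • (d0 • E^{∘(m+n−1)}). (Theorem 6: the powers of an Euler field generate a half of the Virasoro algebra on an arbitrary, not necessarily semisimple, Frobenius manifold.) -/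
/-!
The F-identity makes `X ↦ P_X` a derivation along `∘`, so `P_E(Z,W) = d0 Z∘W` gives
`P_{E^{k+1}}(Z,W) = (k+1) d0 E^k∘Z∘W`. Evaluating at `Z = W = e` yields
`[E^{k+1}, e] = -(k+1) d0 E^k`. Writing `[E^{k+1}, E∘E^m]` by means of `P_{E^{k+1}}(E, E^m)` gives
a recursion in `m` whose only other input is `[E, E^{k+1}] = k d0 E^{k+1}`, obtained from the same
recursion for `P_E`. This settles `n ≥ 1`; the case `n = 0` follows by skew-symmetry.
-/

/-- The deviation `P_X(Z,W) = [X, Z∘W] − [X,Z]∘W − Z∘[X,W]` of the structure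
`(A, ∘, [·,·])` from being a Poisson algebra. -/
def Pdev {R A : Type*} [CommRing R] [AddCommGroup A] [Module R A]
    (mul brk : A →ₗ[R] A →ₗ[R] A) (X Z W : A) : A :=
  brk X (mul Z W) - mul (brk X Z) W - mul Z (brk X W)

/-- Theorem 6: on an F-algebra with identity `e`, the ∘-powers of an Euler field `E`
of weight `d0` satisfy `[E^{∘n}, E^{∘m}] = (m − n) • (d0 • E^{∘(m+n−1)})`. -/
theorem euler_powers_virasoro {R A : Type*} [CommRing R] [AddCommGroup A] [Module R A]
    (mul brk : A →ₗ[R] A →ₗ[R] A)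
    (hcomm : ∀ x y : A, mul x y = mul y x)
    (hassoc : ∀ x y z : A, mul (mul x y) z = mul x (mul y z))
    (halt : ∀ x : A, brk x x = 0)
    (hjac : ∀ x y z : A, brk x (brk y z) + brk y (brk z x) + brk z (brk x y) = 0)
    (hF : ∀ x y z w : A,
      Pdev mul brk (mul x y) z w = mul x (Pdev mul brk y z w) + mul y (Pdev mul brk x z w))
    (e : A) (he : ∀ x : A, mul e x = x)
    (d0 : R) (E : A)
    (hE : ∀ Z W : A, Pdev mul brk E Z W = d0 • mul Z W)
    (pow : ℕ → A) (hpow0 : pow 0 = e) (hpowS : ∀ k : ℕ, pow (k + 1) = mul E (pow k)) :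
    ∀ m n : ℕ, 1 ≤ m + n →
      brk (pow n) (pow m) = ((m : ℤ) - (n : ℤ)) • (d0 • pow (m + n - 1)) := by
  have he' : ∀ x : A, mul x e = x := fun x => by rw [hcomm, he]
  have hskew : ∀ x y : A, brk x y = -brk y x := by
    intro x y
    have h := halt (x + y)
    simp only [map_add, LinearMap.add_apply, halt, zero_add, add_zero] at h
    exact eq_neg_of_add_eq_zero_right h
  have hpow1 : pow 1 = E := by rw [hpowS 0, hpow0, he']
  have hmulpow : ∀ a b : ℕ, mul (pow a) (pow b) = pow (a + b) := by
    intro a b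
    induction a with
    | zero => rw [hpow0, he, zero_add]
    | succ a ih => rw [hpowS, hassoc, ih, ← hpowS, Nat.add_right_comm]
  have hP : ∀ (k : ℕ) (z w : A),
      Pdev mul brk (pow (k + 1)) z w = (((k : R) + 1) * d0) • mul (pow k) (mul z w) := by
    intro k z w
    induction k with
    | zero => rw [zero_add, hpow1, hE, hpow0, he]; simp
    | succ k ih =>
      rw [hpowS (k + 1), hF, ih, hE, map_smul, map_smul, ← hassoc, ← hpowS]
      push_cast
      module
  -- The bracket of a power with a product, solved from the formula for `P_{E^{k+1}}`.
  have hbrk : ∀ (k : ℕ) (z w : A), brk (pow (k + 1)) (mul z w) =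
      (((k : R) + 1) * d0) • mul (pow k) (mul z w)
        + mul (brk (pow (k + 1)) z) w + mul z (brk (pow (k + 1)) w) := by
    intro k z w
    rw [← hP, Pdev]
    abel
  have hbrke : ∀ k : ℕ, brk (pow (k + 1)) e = -((((k : R) + 1) * d0) • pow k) := by
    intro k
    have h := hP k e e
    rw [Pdev, he, he', he, he', sub_self, zero_sub] at h
    rw [← h, neg_neg]
  have hbrkE : ∀ k : ℕ, brk E (pow (k + 1)) = ((k : R) * d0) • pow (k + 1) := by
    intro k
    induction k with
    | zero => rw [zero_add, hpow1, halt]; simp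
    | succ k ih =>
      have h := hbrk 0 E (pow (k + 1))
      rw [zero_add, hpow1, halt, ih, hpow0, he, map_smul, ← hpowS] at h
      rw [hpowS (k + 1), ← hpowS, h]
      simp only [map_zero, LinearMap.zero_apply]
      push_cast
      module
  have hmain : ∀ k m : ℕ,
      brk (pow (k + 1)) (pow m) = (((m : R) - ((k : R) + 1)) * d0) • pow (m + k) := by
    intro k m
    induction m with
    | zero =>
      rw [hpow0, hbrke, zero_add]
      push_cast
      module
    | succ m ih =>
      have e1 : k + (m + 1) = m + 1 + k := by omega
      have e2 : k + 1 + m = m + 1 + k := by omega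
      have e3 : m + k + 1 = m + 1 + k := by omega
      rw [hpowS m, hbrk, ih, ← hpowS, hmulpow, hskew _ E, hbrkE, map_neg, map_smul, map_smul,
        LinearMap.neg_apply, LinearMap.smul_apply, hmulpow, ← hpowS, e1, e2, e3]
      push_cast
      module
  intro m n hmn
  rw [← Int.cast_smul_eq_zsmul R, smul_smul]
  push_cast
  rcases n with _ | k
  · obtain ⟨j, rfl⟩ : ∃ j, m = j + 1 := ⟨m - 1, by omega⟩
    rw [hskew, hmain, zero_add, add_zero, Nat.add_sub_cancel]
    push_cast
    module
  · rw [hmain, ← add_assoc, Nat.add_sub_cancel]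
    push_cast
    rfl
end

section
/- Let A be a module over a commutative ring R equipped with an R-bilinear multiplication ∘ : A × A → A and a bracket [·,·] : A × A → A which is R-bilinear, alternating and satisfies the Jacobi identity. Let d1, d2 ∈ R and let E1, E2 ∈ A satisfy P_{E1}(Z,W) = d1 • (Z∘W) and P_{E2}(Z,W) = d2 • (Z∘W) for all Z, W ∈ A (i.e. E1, E2 are weak Euler fields of weights d1, d2). Then P_{[E1,E2]}(Z,W) = 0 for all Z, W ∈ A, i.e. the commutator of any two weak Euler fields is a weak Euler field of weight zero. (Proposition 4.3.) -/
/-- Proposition 4.3: the commutator of two weak Euler fields (of weights `d1`, `d2`)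
is a weak Euler field of weight zero. -/
theorem bracket_of_euler_fields_is_euler_weight_zero
    {R A : Type*} [CommRing R] [AddCommGroup A] [Module R A]
    (mul brk : A →ₗ[R] A →ₗ[R] A)
    (halt : ∀ x : A, brk x x = 0)
    (hjac : ∀ x y z : A, brk x (brk y z) + brk y (brk z x) + brk z (brk x y) = 0)
    (d1 d2 : R) (E1 E2 : A)
    (hE1 : ∀ Z W : A, Pdev mul brk E1 Z W = d1 • mul Z W)
    (hE2 : ∀ Z W : A, Pdev mul brk E2 Z W = d2 • mul Z W) :
    ∀ Z W : A, Pdev mul brk (brk E1 E2) Z W = 0 := by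
  have hanti : ∀ x y : A, brk x y = -brk y x := fun x y => by
    have h := halt (x + y)
    simp only [map_add, LinearMap.add_apply, halt, zero_add, add_zero] at h
    exact eq_neg_of_add_eq_zero_right h
  have hcomm : ∀ z : A, brk (brk E1 E2) z = brk E1 (brk E2 z) - brk E2 (brk E1 z) := fun z => by
    have h := hjac E1 E2 z
    rw [hanti z E1, hanti z (brk E1 E2), map_neg] at h
    rw [eq_comm, ← sub_eq_zero, ← h]
    abel
  have hleib1 : ∀ Z W : A,
      brk E1 (mul Z W) = mul (brk E1 Z) W + mul Z (brk E1 W) + d1 • mul Z W := fun Z W => by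
    rw [← hE1 Z W, Pdev]
    abel
  have hleib2 : ∀ Z W : A,
      brk E2 (mul Z W) = mul (brk E2 Z) W + mul Z (brk E2 W) + d2 • mul Z W := fun Z W => by
    rw [← hE2 Z W, Pdev]
    abel
  intro Z W
  simp only [Pdev, hcomm, hleib1, hleib2, map_add, map_sub, map_smul, LinearMap.sub_apply,
    smul_add]
  -- The only terms not cancelling additively are `d2 • d1 • mul Z W` and `d1 • d2 • mul Z W`.
  rw [smul_comm d2 d1]
  abel
end

section
/- Let (A, ∘, [·,·]) be an F-algebra over a commutative ring R, and let B := {X ∈ A | P_X(Z,W) = 0 for all Z, W ∈ A}. Then: (i) if X, Y ∈ B then X∘Y ∈ B; (ii) if X, Y ∈ B then [X,Y] ∈ B; (iii) if ∘ has an identity element e, then e ∈ B. Consequently B is closed under ∘ and [·,·] and forms a Poisson subalgebra of A. (Proposition 5.1a.) -/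
/-- Proposition 5.1a: in an F-algebra, the set `B = {X | P_X ≡ 0}` is closed under
`∘` and `[·,·]`, and contains the identity `e` of `∘` (hence is a Poisson subalgebra). -/
theorem poisson_subalgebra {R A : Type*} [CommRing R] [AddCommGroup A] [Module R A]
    (mul brk : A →ₗ[R] A →ₗ[R] A)
    (hcomm : ∀ x y : A, mul x y = mul y x)
    (hassoc : ∀ x y z : A, mul (mul x y) z = mul x (mul y z))
    (halt : ∀ x : A, brk x x = 0)
    (hjac : ∀ x y z : A, brk x (brk y z) + brk y (brk z x) + brk z (brk x y) = 0)
    (hF : ∀ x y z w : A,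
      Pdev mul brk (mul x y) z w = mul x (Pdev mul brk y z w) + mul y (Pdev mul brk x z w))
    (e : A) (he : ∀ x : A, mul e x = x) :
    (∀ X Y : A, (∀ Z W : A, Pdev mul brk X Z W = 0) → (∀ Z W : A, Pdev mul brk Y Z W = 0) →
        ∀ Z W : A, Pdev mul brk (mul X Y) Z W = 0) ∧
    (∀ X Y : A, (∀ Z W : A, Pdev mul brk X Z W = 0) → (∀ Z W : A, Pdev mul brk Y Z W = 0) →
        ∀ Z W : A, Pdev mul brk (brk X Y) Z W = 0) ∧
    (∀ Z W : A, Pdev mul brk e Z W = 0) := by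
  refine ⟨fun X Y hX hY Z W => by rw [hF, hX, hY]; simp, fun X Y hX hY Z W => ?_, fun Z W => ?_⟩
  · have hskew : ∀ x y : A, brk x y = -brk y x := fun x y => by
      have h := halt (x + y)
      simp only [map_add, LinearMap.add_apply, halt, zero_add, add_zero] at h
      rw [add_comm] at h
      exact eq_neg_of_add_eq_zero_left h
    have hder : ∀ U : A, (∀ Z W : A, Pdev mul brk U Z W = 0) →
        ∀ z w : A, brk U (mul z w) = mul (brk U z) w + mul z (brk U w) := fun U hU z w => by
      have h := hU z w
      rwa [Pdev, sub_sub, sub_eq_zero] at h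
    -- The Jacobi identity in the form `ad [X,Y] = [ad X, ad Y]`.
    have had : ∀ z : A, brk (brk X Y) z = brk X (brk Y z) - brk Y (brk X z) := fun z => by
      have h := hjac X Y z
      rw [hskew z X, hskew z (brk X Y), map_neg] at h
      rw [← sub_eq_zero, ← neg_eq_zero, ← h]
      abel
    -- A commutator of derivations is a derivation: the mixed terms cancel.
    simp only [Pdev, had, hder X hX, hder Y hY, map_add, map_sub, LinearMap.sub_apply]
    abel
  · -- Since `e ∘ e = e`, the F-identity reads `P_e = P_e + P_e`.
    have h := hF e e Z W
    rw [he, he] at h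
    exact left_eq_add.mp h
end

section
/- Let (A, ∘, [·,·]) be an F-algebra over a commutative ring R, and let u ∈ A be a ∘-idempotent, i.e. u∘u = u. Then P_u(Z,W) = 0 for all Z, W ∈ A. (This is the key step in the proof of Theorem 2b and Corollary 2.1: for a basic idempotent vector field e_i the F-identity gives P_{e_i} = 2 e_i ∘ P_{e_i}, hence P_{e_i} = 0.) -/
/-- In an F-algebra, every ∘-idempotent `u` satisfies `P_u ≡ 0`
(key step in the proof of Theorem 2b and Corollary 2.1). -/
theorem Pdev_of_idempotent_eq_zero {R A : Type*} [CommRing R] [AddCommGroup A] [Module R A]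
    (mul brk : A →ₗ[R] A →ₗ[R] A)
    (hcomm : ∀ x y : A, mul x y = mul y x)
    (hassoc : ∀ x y z : A, mul (mul x y) z = mul x (mul y z))
    (halt : ∀ x : A, brk x x = 0)
    (hjac : ∀ x y z : A, brk x (brk y z) + brk y (brk z x) + brk z (brk x y) = 0)
    (hF : ∀ x y z w : A,
      Pdev mul brk (mul x y) z w = mul x (Pdev mul brk y z w) + mul y (Pdev mul brk x z w))
    (u : A) (hu : mul u u = u) :
    ∀ Z W : A, Pdev mul brk u Z W = 0 := by
  intro Z W
  have h : Pdev mul brk u Z W = mul u (Pdev mul brk u Z W) + mul u (Pdev mul brk u Z W) := by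
    simpa only [hu] using hF u u Z W
  -- Multiplying `P = u∘P + u∘P` by the idempotent `u` gives `u∘P = u∘P + u∘P`, so `u∘P = 0`;
  -- no assumption on 2-torsion is needed.
  have h0 : mul u (Pdev mul brk u Z W) = 0 := by
    have h' := congrArg (mul u) h
    rw [map_add, ← hassoc, hu] at h'
    exact left_eq_add.mp h'
  rw [h, h0, add_zero]
end

section
/- Let (A, ∘, [·,·]) be an F-algebra over a commutative ring R, and let u, v ∈ A be orthogonal ∘-idempotents: u∘u = u, v∘v = v, and u∘v = 0. Then [u,v] = 0. (This is the forward direction of Corollary 2.1: on a semisimple F-manifold the basic idempotent vector fields e_i pairwise commute, which yields Dubrovin's canonical coordinates.) -/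
theorem eq_zero_of_eq_idem_mul_add {R A : Type*} [CommRing R] [AddCommGroup A] [Module R A]
    (mul : A →ₗ[R] A →ₗ[R] A)
    (hassoc : ∀ x y z : A, mul (mul x y) z = mul x (mul y z))
    {e x : A} (he : mul e e = e) (hx : x = mul e x + mul e x) : x = 0 := by
  have h : mul e x = mul e x + mul e x := by
    have h' := congrArg (mul e) hx
    rwa [map_add, ← hassoc, he] at h'
  have h0 : mul e x = 0 := by simpa using h
  rw [hx, h0, add_zero]

/-- Corollary 2.1 (forward direction): in an F-algebra, orthogonal ∘-idempotents
commute, `[u,v] = 0`. -/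
theorem orthogonal_idempotents_commute {R A : Type*} [CommRing R] [AddCommGroup A] [Module R A]
    (mul brk : A →ₗ[R] A →ₗ[R] A)
    (hcomm : ∀ x y : A, mul x y = mul y x)
    (hassoc : ∀ x y z : A, mul (mul x y) z = mul x (mul y z))
    (halt : ∀ x : A, brk x x = 0)
    (hjac : ∀ x y z : A, brk x (brk y z) + brk y (brk z x) + brk z (brk x y) = 0)
    (hF : ∀ x y z w : A,
      Pdev mul brk (mul x y) z w = mul x (Pdev mul brk y z w) + mul y (Pdev mul brk x z w))
    (u v : A) (hu : mul u u = u) (hv : mul v v = v) (huv : mul u v = 0) :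
    brk u v = 0 := by
  have hP : Pdev mul brk u v v = 0 := by
    apply eq_zero_of_eq_idem_mul_add mul hassoc hu
    simpa only [hu] using hF u u v v
  apply eq_zero_of_eq_idem_mul_add mul hassoc hv
  rw [Pdev, hv, hcomm (brk u v) v, sub_sub, sub_eq_zero] at hP
  exact hP
end

section
/- Let n be a natural number, E = (Fin n → ℝ), and equip C^∞ vector fields on E with the componentwise multiplication (X∘Y)(p)(i) := X(p)(i) · Y(p)(i). If X : E → E is a C^∞ vector field such that P_X(Z,W) := [X, Z∘W] − [X,Z]∘W − Z∘[X,W] vanishes for all C^∞ vector fields Z, W : E → E, then X is a constant map (each component function of X is constant). (Proposition 5.1b: on a split semisimple Frobenius manifold the Poisson subalgebra B is spanned over the constants by the basic idempotent fields e_i.) -/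
/-!
Evaluate the hypothesis on `Z = W = e_i`, the constant coordinate field. Since `e_i ∘ e_i = e_i` and
`[X, e_i] = -∂_i X`, it reads `∂_i X = 2 e_i ∘ ∂_i X`. The `j`-th component is `∂_i X_j = 0` for
`j ≠ i` and `∂_i X_i = 2 ∂_i X_i` for `j = i`, so `∂_i X = 0` for all `i`. Hence `DX = 0` and `X` is
constant.
-/

open VectorField

/-- Componentwise multiplication of vector fields on `Fin n → ℝ`:
`(X∘Y)(p)(i) = X(p)(i) * Y(p)(i)`. -/
def cmul {n : ℕ} (X Y : (Fin n → ℝ) → (Fin n → ℝ)) : (Fin n → ℝ) → (Fin n → ℝ) :=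
  fun p i => X p i * Y p i

/-- Proposition 5.1b: on the split semisimple F-manifold `Fin n → ℝ` with componentwise
multiplication, a `C^∞` vector field `X` with `P_X(Z,W) = 0` for all `C^∞` vector fields
`Z, W` is constant. -/
theorem Pdev_zero_implies_constant {n : ℕ}
    (X : (Fin n → ℝ) → (Fin n → ℝ)) (hX : ContDiff ℝ (⊤ : ℕ∞) X)
    (h : ∀ Z W : (Fin n → ℝ) → (Fin n → ℝ), ContDiff ℝ (⊤ : ℕ∞) Z → ContDiff ℝ (⊤ : ℕ∞) W →
      lieBracket ℝ X (cmul Z W) - cmul (lieBracket ℝ X Z) W - cmul Z (lieBracket ℝ X W) = 0) :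
    ∀ p q : Fin n → ℝ, X p = X q := by
  have hD : Differentiable ℝ X := hX.differentiable (by simp)
  refine is_const_of_fderiv_eq_zero hD fun p => ?_
  -- The coordinate fields `e_i` form a basis and are idempotent and constant, so `P_X(e_i, e_i)`
  -- only involves the directional derivative of `X` along `e_i`.
  have key : ∀ i : Fin n, fderiv ℝ X p (Pi.single i 1) = 0 := by
    intro i
    have hidem : cmul (fun _ => Pi.single i (1 : ℝ)) (fun _ => Pi.single i 1)
        = fun _ : Fin n → ℝ => Pi.single i (1 : ℝ) := by
      funext _ j
      by_cases hj : j = i <;> simp [cmul, Pi.single_apply, hj]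
    have h0 := h (fun _ => Pi.single i 1) (fun _ => Pi.single i 1) contDiff_const contDiff_const
    rw [hidem] at h0
    funext j
    have h1 := congrFun (congrFun h0 p) j
    by_cases hj : j = i
    · subst hj
      simp [lieBracket, cmul] at h1
      simpa using h1
    · simpa [lieBracket, cmul, Pi.single_apply, hj] using h1
  apply ContinuousLinearMap.coe_injective
  refine LinearMap.pi_ext' fun i => LinearMap.ext_ring ?_
  simpa using key i
end

section
/- Let n be a natural number and E = (Fin n → ℝ). Equip C^∞ vector fields on E with the componentwise multiplication (X∘Y)(p)(i) := X(p)(i) · Y(p)(i). Then for all C^∞ vector fields X, Y, Z, W : E → E the F-manifold identity holds: [X∘Y, Z∘W] − [X∘Y,Z]∘W − Z∘[X∘Y,W] − X∘[Y,Z∘W] + X∘[Y,Z]∘W + X∘Z∘[Y,W] − Y∘[X,Z∘W] + Y∘[X,Z]∘W + Y∘Z∘[X,W] = 0. (This is the converse direction of Corollary 2.1: a manifold admitting a basis of pairwise commuting idempotent vector fields, i.e. Dubrovin's canonical coordinates, is an F-manifold.) -/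
/-!
The multiplication `cmul` has constant coefficients in the standard coordinates, so directional
derivatives satisfy the Leibniz rule `D(X∘Y)(p)(v) = X(p)∘DY(p)(v) + Y(p)∘DX(p)(v)`
(`fderiv_cmul_apply`). Expanding every bracket by this rule turns each component of the nine-term
expression into a polynomial in the components of the fields and in directional derivatives such as
`DZ(p)(X(p)∘Y(p))` and `DZ(p)(X(p))`, and all terms cancel by commutativity of `ℝ`.
-/

open VectorField

/-- Leibniz rule for the componentwise multiplication, read off in the `i`-th component. -/
lemma fderiv_cmul_apply {n : ℕ} {X Y : (Fin n → ℝ) → (Fin n → ℝ)}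
    (hX : Differentiable ℝ X) (hY : Differentiable ℝ Y) (p v : Fin n → ℝ) (i : Fin n) :
    fderiv ℝ (cmul X Y) p v i = X p i * fderiv ℝ Y p v i + Y p i * fderiv ℝ X p v i := by
  have hXi := hasFDerivAt_pi'.1 (hX p).hasFDerivAt
  have hYi := hasFDerivAt_pi'.1 (hY p).hasFDerivAt
  have h : HasFDerivAt (cmul X Y) _ p := hasFDerivAt_pi.2 fun j => (hXi j).mul (hYi j)
  rw [h.fderiv]
  simp

/-- Corollary 2.1 (converse direction): the componentwise multiplication on vector fields
of `Fin n → ℝ` (Dubrovin's canonical coordinates) satisfies the nine-term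
F-manifold identity (1) for all `C^∞` vector fields. -/
theorem canonical_coordinates_give_F_manifold {n : ℕ}
    (X Y Z W : (Fin n → ℝ) → (Fin n → ℝ))
    (hX : ContDiff ℝ (⊤ : ℕ∞) X) (hY : ContDiff ℝ (⊤ : ℕ∞) Y)
    (hZ : ContDiff ℝ (⊤ : ℕ∞) Z) (hW : ContDiff ℝ (⊤ : ℕ∞) W) :
    lieBracket ℝ (cmul X Y) (cmul Z W)
      - cmul (lieBracket ℝ (cmul X Y) Z) W
      - cmul Z (lieBracket ℝ (cmul X Y) W)
      - cmul X (lieBracket ℝ Y (cmul Z W))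
      + cmul X (cmul (lieBracket ℝ Y Z) W)
      + cmul X (cmul Z (lieBracket ℝ Y W))
      - cmul Y (lieBracket ℝ X (cmul Z W))
      + cmul Y (cmul (lieBracket ℝ X Z) W)
      + cmul Y (cmul Z (lieBracket ℝ X W)) = 0 := by
  have dX : Differentiable ℝ X := hX.differentiable (by simp)
  have dY : Differentiable ℝ Y := hY.differentiable (by simp)
  have dZ : Differentiable ℝ Z := hZ.differentiable (by simp)
  have dW : Differentiable ℝ W := hW.differentiable (by simp)
  funext p i
  -- The outer products are unfolded through `cmul_val`, which leaves `cmul` intact under `fderiv`.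
  have cmul_val : ∀ U V : (Fin n → ℝ) → (Fin n → ℝ), cmul U V p i = U p i * V p i :=
    fun _ _ => rfl
  simp only [Pi.add_apply, Pi.sub_apply, Pi.zero_apply, cmul_val, lieBracket,
    fderiv_cmul_apply dX dY, fderiv_cmul_apply dZ dW]
  ring
end

section
/- Let A be a module over a commutative ring R equipped with an R-bilinear multiplication ∘ : A × A → A and an R-bilinear, alternating bracket [·,·] : A × A → A satisfying the Jacobi identity. Then for all X, Y, Z, W ∈ A the following identity (15) holds: P_{[X,Y]}(Z,W) = [X, P_Y(Z,W)] − P_Y([X,Z], W) − P_Y(Z, [X,W]) − [Y, P_X(Z,W)] + P_X([Y,Z], W) + P_X(Z, [Y,W]). -/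
/-- Identity (15) of the paper. -/
theorem Pdev_bracket_identity {R A : Type*} [CommRing R] [AddCommGroup A] [Module R A]
    (mul brk : A →ₗ[R] A →ₗ[R] A)
    (halt : ∀ x : A, brk x x = 0)
    (hjac : ∀ x y z : A, brk x (brk y z) + brk y (brk z x) + brk z (brk x y) = 0) :
    ∀ X Y Z W : A,
      Pdev mul brk (brk X Y) Z W
        = brk X (Pdev mul brk Y Z W)
          - Pdev mul brk Y (brk X Z) W - Pdev mul brk Y Z (brk X W)
          - brk Y (Pdev mul brk X Z W)
          + Pdev mul brk X (brk Y Z) W + Pdev mul brk X Z (brk Y W) := by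
  have hskew : ∀ x y : A, brk x y = -brk y x := fun x y => by
    have h := halt (x + y)
    simp only [map_add, LinearMap.add_apply, halt, zero_add, add_zero] at h
    exact eq_neg_of_add_eq_zero_right h
  -- Jacobi in derivation form: `ad [x, y]` is the commutator of `ad x` and `ad y`.
  have hder : ∀ x y z : A, brk (brk x y) z = brk x (brk y z) - brk y (brk x z) := by
    intro x y z
    have h := hjac x y z
    rw [hskew z x, hskew z (brk x y), map_neg] at h
    rw [← sub_eq_zero, ← neg_eq_zero, ← h]
    abel
  -- `P_X` is the action of `ad X` on the bilinear map `mul`, so after expansion the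
  -- mixed terms, symmetric in `X` and `Y`, cancel.
  intro X Y Z W
  simp only [Pdev, hder, map_sub, LinearMap.sub_apply]
  abel
end

section
/- Let (A, ∘, [·,·]) be an F-algebra over a commutative ring R with identity element e for ∘, and let X ∈ A. Then for every natural number n ≥ 1 identity (18) holds: [X^{∘n}, e] = n • (X^{∘(n−1)} ∘ [X, e]), where X^{∘k} denotes the k-th ∘-power of X and X^{∘0} := e. -/
/-- In an F-algebra with identity `e`, the map `x ↦ [x, e]` is a derivation of `∘`:
since `P_x(e,e) = -[x, e]`, this is the F-identity evaluated at `z = w = e`. -/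
theorem bracket_unit_derivation {R A : Type*} [CommRing R] [AddCommGroup A] [Module R A]
    (mul brk : A →ₗ[R] A →ₗ[R] A)
    (hcomm : ∀ x y : A, mul x y = mul y x)
    (hF : ∀ x y z w : A,
      Pdev mul brk (mul x y) z w = mul x (Pdev mul brk y z w) + mul y (Pdev mul brk x z w))
    (e : A) (he : ∀ x : A, mul e x = x) (x y : A) :
    brk (mul x y) e = mul x (brk y e) + mul y (brk x e) := by
  have hP : ∀ a : A, Pdev mul brk a e e = -brk a e := by
    intro a
    rw [Pdev, hcomm (brk a e) e, he, he]
    abel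
  have h := hF x y e e
  rw [hP, hP, hP, map_neg, map_neg, ← neg_add] at h
  exact neg_injective h

/-- Identity (18): in an F-algebra with identity `e`,
`[X^{∘n}, e] = n • (X^{∘(n−1)} ∘ [X, e])` for `n ≥ 1`. -/
theorem bracket_pow_identity {R A : Type*} [CommRing R] [AddCommGroup A] [Module R A]
    (mul brk : A →ₗ[R] A →ₗ[R] A)
    (hcomm : ∀ x y : A, mul x y = mul y x)
    (hassoc : ∀ x y z : A, mul (mul x y) z = mul x (mul y z))
    (halt : ∀ x : A, brk x x = 0)
    (hjac : ∀ x y z : A, brk x (brk y z) + brk y (brk z x) + brk z (brk x y) = 0)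
    (hF : ∀ x y z w : A,
      Pdev mul brk (mul x y) z w = mul x (Pdev mul brk y z w) + mul y (Pdev mul brk x z w))
    (e : A) (he : ∀ x : A, mul e x = x)
    (X : A) (pow : ℕ → A) (hpow0 : pow 0 = e)
    (hpowS : ∀ k : ℕ, pow (k + 1) = mul X (pow k)) :
    ∀ n : ℕ, 1 ≤ n → brk (pow n) e = n • mul (pow (n - 1)) (brk X e) := by
  have hD := bracket_unit_derivation mul brk hcomm hF e he
  -- Shifting the index avoids the truncated subtraction `n - 1`.
  have key : ∀ k : ℕ, brk (pow (k + 1)) e = (k + 1) • mul (pow k) (brk X e) := by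
    intro k
    induction k with
    | zero => rw [hpowS, hpow0, hcomm X e, he, he, zero_add, one_smul]
    | succ k ih =>
      rw [hpowS (k + 1), hD, ih, map_nsmul, ← hassoc, ← hpowS k, succ_nsmul _ (k + 1)]
  intro n hn
  obtain ⟨k, rfl⟩ := Nat.exists_eq_add_of_le' hn
  exact key k
end

section
/- Let (A, ∘, [·,·]) be an F-algebra over a commutative ring R with identity element e for ∘, and let X ∈ A satisfy identity (19): [X^{∘n}, X] = (1 − (n : ℤ)) • (X^{∘n} ∘ [e, X]) for every natural number n ≥ 1. Then identity (20) holds: for all natural numbers m, n with m + n ≥ 1, [X^{∘n}, X^{∘m}] = ((m : ℤ) − (n : ℤ)) • (X^{∘(m+n−1)} ∘ [e, X]), where X^{∘k} denotes the k-th ∘-power of X and X^{∘0} := e. -/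
/-- Identity (19) implies identity (20): if `[X^{∘n}, X] = (1 − n) • (X^{∘n} ∘ [e,X])`
for all `n ≥ 1`, then `[X^{∘n}, X^{∘m}] = (m − n) • (X^{∘(m+n−1)} ∘ [e,X])`
for all `m + n ≥ 1`. -/
theorem bracket_powers_of_identity19 {R A : Type*} [CommRing R] [AddCommGroup A] [Module R A]
    (mul brk : A →ₗ[R] A →ₗ[R] A)
    (hcomm : ∀ x y : A, mul x y = mul y x)
    (hassoc : ∀ x y z : A, mul (mul x y) z = mul x (mul y z))
    (halt : ∀ x : A, brk x x = 0)
    (hjac : ∀ x y z : A, brk x (brk y z) + brk y (brk z x) + brk z (brk x y) = 0)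
    (hF : ∀ x y z w : A,
      Pdev mul brk (mul x y) z w = mul x (Pdev mul brk y z w) + mul y (Pdev mul brk x z w))
    (e : A) (he : ∀ x : A, mul e x = x)
    (X : A) (pow : ℕ → A) (hpow0 : pow 0 = e)
    (hpowS : ∀ k : ℕ, pow (k + 1) = mul X (pow k))
    (h19 : ∀ n : ℕ, 1 ≤ n →
      brk (pow n) X = (1 - (n : ℤ)) • mul (pow n) (brk e X)) :
    ∀ m n : ℕ, 1 ≤ m + n →
      brk (pow n) (pow m) = ((m : ℤ) - (n : ℤ)) • mul (pow (m + n - 1)) (brk e X) := by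
  have hskew : ∀ x y : A, brk x y = -brk y x := by
    intro x y
    have h := halt (x + y)
    simp only [map_add, LinearMap.add_apply, halt, zero_add, add_zero] at h
    exact eq_neg_of_add_eq_zero_right h
  have hpow1 : pow 1 = X := by rw [hpowS, hpow0, hcomm, he]
  have hpowadd : ∀ j k : ℕ, mul (pow j) (pow k) = pow (j + k) := by
    intro j k
    induction j with
    | zero => rw [hpow0, he, zero_add]
    | succ j ih => rw [hpowS, hassoc, ih, ← hpowS]; congr 1; omega
  obtain ⟨Q, hQ⟩ : ∃ Q : ℕ → A, ∀ k, Q k = mul (pow k) (brk e X) := ⟨_, fun _ => rfl⟩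
  have hQadd : ∀ j k : ℕ, mul (pow j) (Q k) = Q (j + k) := by
    intro j k
    rw [hQ, hQ, ← hassoc, hpowadd]
  have hXQ : ∀ k : ℕ, mul X (Q k) = Q (k + 1) := by
    intro k
    rw [hQ, hQ, ← hassoc, ← hpowS]
  have hPe : ∀ z w : A, Pdev mul brk e z w = 0 := by
    intro z w
    have h := hF e e z w
    rw [he, he] at h
    exact left_eq_add.mp h
  have hee : ∀ k : ℕ, brk e (pow (k + 1)) = ((k : ℤ) + 1) • Q k := by
    intro k
    induction k with
    | zero => simp [hpow1, hQ, hpow0, he]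
    | succ k ih =>
      have h := hPe X (pow (k + 1))
      rw [Pdev, ← hpowS, ih, hcomm (brk e X), ← hQ, map_zsmul, hXQ, sub_sub, sub_eq_zero] at h
      rw [h]; push_cast; module
  have hP : ∀ (k : ℕ) (z w : A), Pdev mul brk (pow (k + 1)) z w
      = ((k : ℤ) + 1) • mul (pow k) (Pdev mul brk X z w) := by
    intro k z w
    induction k with
    | zero => simp [hpow1, hpow0, he]
    | succ k ih =>
      rw [hpowS (k + 1), hF, ih, map_zsmul, ← hassoc, ← hpowS]
      push_cast; module
  have hXpow : ∀ k : ℕ, brk X (pow k) = ((k : ℤ) - 1) • Q k := by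
    intro k
    -- `h19` does not cover `k = 0`, where the claim is just skew-symmetry.
    rcases Nat.eq_zero_or_pos k with rfl | hk
    · rw [hskew, hpow0, hQ, hpow0, he]; simp
    · rw [hskew, h19 k hk, ← hQ]; module
  have hPX : ∀ m : ℕ, Pdev mul brk X X (pow m) = Q (m + 1) := by
    intro m
    rw [Pdev, ← hpowS, halt, hXpow, hXpow, map_zsmul, hXQ]
    simp only [map_zero, LinearMap.zero_apply]
    push_cast; module
  have hmain : ∀ m k : ℕ, brk (pow (k + 1)) (pow m) = ((m : ℤ) - (k + 1)) • Q (m + k) := by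
    intro m k
    induction m with
    | zero => rw [hpow0, hskew, hee, zero_add]; push_cast; module
    | succ m ih =>
      have h := hP k X (pow m)
      rw [hPX, hQadd, Pdev, ← hpowS, ih, hcomm (brk _ X), h19 (k + 1) (by omega), ← hQ,
        map_zsmul, map_zsmul, hQadd, hXQ, sub_sub, sub_eq_iff_eq_add] at h
      rw [h, show k + (m + 1) = m + 1 + k by omega, show m + (k + 1) = m + 1 + k by omega,
        show m + k + 1 = m + 1 + k by omega]
      push_cast; module
  intro m n hmn
  rw [← hQ]
  rcases n with _ | k
  · obtain ⟨j, rfl⟩ : ∃ j, m = j + 1 := ⟨m - 1, by omega⟩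
    rw [hpow0, hee]; simp
  · rw [hmain]; push_cast; rfl
end

section
/- Let A be a module over a commutative ring R equipped with an R-bilinear commutative and associative multiplication ∘ : A × A → A and an R-bilinear, alternating bracket [·,·] : A × A → A. Let d0 ∈ R and let E ∈ A satisfy P_E(Z,W) = d0 • (Z∘W) for all Z, W ∈ A. Then for every natural number n ≥ 1: [E^{∘n}, E] = (1 − (n : ℤ)) • (d0 • E^{∘n}), where E^{∘k} denotes the k-th ∘-power of E. (This verifies that an Euler field satisfies identity (19), the key step in the proof of Theorem 6.) -/
/-- An Euler field `E` of weight `d0` satisfies identity (19):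
`[E^{∘n}, E] = (1 − n) • (d0 • E^{∘n})` for all `n ≥ 1`. -/
theorem euler_field_identity19 {R A : Type*} [CommRing R] [AddCommGroup A] [Module R A]
    (mul brk : A →ₗ[R] A →ₗ[R] A)
    (hcomm : ∀ x y : A, mul x y = mul y x)
    (hassoc : ∀ x y z : A, mul (mul x y) z = mul x (mul y z))
    (halt : ∀ x : A, brk x x = 0)
    (d0 : R) (E : A)
    (hE : ∀ Z W : A, Pdev mul brk E Z W = d0 • mul Z W)
    (pow : ℕ → A) (hpow1 : pow 1 = E)
    (hpowS : ∀ k : ℕ, 1 ≤ k → pow (k + 1) = mul E (pow k)) :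
    ∀ n : ℕ, 1 ≤ n → brk (pow n) E = (1 - (n : ℤ)) • (d0 • pow n) := by
  have key : ∀ n : ℕ, 1 ≤ n → brk E (pow n) = ((n : ℤ) - 1) • (d0 • pow n) := by
    intro n hn
    induction n, hn using Nat.le_induction with
    | base => simp [hpow1, halt]
    | succ k hk ih =>
      have h := hE E (pow k)
      rw [Pdev, halt, ih, ← hpowS k hk, map_zero, LinearMap.zero_apply, sub_zero, map_zsmul,
        map_smul, ← hpowS k hk, sub_eq_iff_eq_add] at h
      rw [h]
      push_cast
      module
  intro n hn
  -- Antisymmetry comes from expanding `[x + y, x + y] = 0`.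
  have hanti : brk (pow n) E + brk E (pow n) = 0 := by
    have h := halt (pow n + E)
    simpa [halt] using h
  rw [eq_neg_of_add_eq_zero_left hanti, key n hn]
  module
end
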